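/- arXiv:1910.09443 — 3 statements merged into one kernel-verified Lean document; each statement's English description precedes it below -/
import Mathlib

section
/- Suppose {(u^d_k, y^d_k)}_{k=0}^{N-1} is a trajectory of the minimal LTI system (A,B,C,D) (i.e. (A,B) is controllable and (A,C) is observable), and u^d is persistently exciting of order 2n+1. Then an input-output pair (u^s, y^s) ∈ ℝ^m × ℝ^p is an equilibrium of (A,B,C,D) if and only if there exists α ∈ ℝ^{N-n} such that H_{n+1}(u^d) α equals the vector consisting of n+1 stacked copies of u^s and H_{n+1}(y^d) α equals the vector consisting of n+1 stacked copies of y^s. -/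
/-!
The equivalence is an instance of Willems' fundamental lemma for constant trajectories. It rests
on one rank fact (`stacked_vecMul_injective`): for a controllable pair and an input that is
persistently exciting of order `2n+1`, the matrix obtained by stacking the states `x_0, …,
x_{N-n-1}` on top of the depth-`(n+1)` input Hankel matrix has full row rank.

For the rank fact, take a vector `(ξ, η_0, …, η_n)` in the left kernel. Using the state equation,
the relation it encodes at time `j + k` is rewritten as a relation between `x_j` and
`u_j, …, u_{j+n+k}`; the coefficients are `ξ A^k` and `relCoeff A B ξ η k` (`relation_shift`). Summing
these relations for `k ≤ n` against the coefficients of the characteristic polynomial of `A` removes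
the state by Cayley–Hamilton, so persistency of excitation makes the combined input coefficients
vanish. Passing from `k` to `k + 1` shifts the input coefficients by one place, so the monic leading
term of the combination dominates and all coefficients vanish for `k ≤ n` (`shift_eq_zero`).
This gives `η = 0` and `ξ A^k B = 0` for `k < n`, hence `ξ = 0` by controllability.

Full row rank lets the data realise any initial state together with any input of length `n + 1`; the
data combination then follows the same states as the equilibrium trajectory. Conversely, a
combination of time shifts of a trajectory is a trajectory by linearity.
-/

/-- Squared Euclidean norm of a vector in `ℝ^d`. -/
noncomputable def sqnorm {d : ℕ} (v : Fin d → ℝ) : ℝ := ∑ i, (v i) ^ 2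

/-- `{(u_k, y_k)}_{k=0}^{N-1}` is a trajectory of the LTI system `(A,B,C,D)`:
there is a state sequence `x` with `x_{k+1} = A x_k + B u_k` and `y_k = C x_k + D u_k`
for all `k ∈ {0, ..., N-1}`. -/
def IsTraj {n m p : ℕ} (A : Matrix (Fin n) (Fin n) ℝ) (B : Matrix (Fin n) (Fin m) ℝ)
    (C : Matrix (Fin p) (Fin n) ℝ) (D : Matrix (Fin p) (Fin m) ℝ)
    (N : ℕ) (u : ℕ → Fin m → ℝ) (y : ℕ → Fin p → ℝ) : Prop :=
  ∃ x : ℕ → Fin n → ℝ, ∀ k < N,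
    x (k + 1) = A.mulVec (x k) + B.mulVec (u k) ∧
    y k = C.mulVec (x k) + D.mulVec (u k)

/-- The Hankel matrix of depth `L` with `cols` columns built from the signal `u`;
its `(i,a),(j)` entry is the `a`-th component of `u_{i+j}`. -/
def Hankel {m : ℕ} (L cols : ℕ) (u : ℕ → Fin m → ℝ) :
    Matrix (Fin L × Fin m) (Fin cols) ℝ :=
  Matrix.of fun ia j => u (ia.1.1 + j.1) ia.2

/-- `(A,B)` is controllable: the controllability matrix `[B, AB, ..., A^{n-1}B]` has rank `n`. -/
noncomputable def Controllable {n m : ℕ} (A : Matrix (Fin n) (Fin n) ℝ)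
    (B : Matrix (Fin n) (Fin m) ℝ) : Prop :=
  (Matrix.of fun (i : Fin n) (kj : Fin n × Fin m) => (A ^ (kj.1 : ℕ) * B) i kj.2).rank = n

/-- `(A,C)` is observable: the observability matrix `[C; CA; ...; CA^{n-1}]` has rank `n`. -/
noncomputable def Observable {n p : ℕ} (A : Matrix (Fin n) (Fin n) ℝ)
    (C : Matrix (Fin p) (Fin n) ℝ) : Prop :=
  (Matrix.of fun (ki : Fin n × Fin p) (j : Fin n) => (C * A ^ (ki.1 : ℕ)) ki.2 j).rank = n

/-- `(u^s, y^s)` is an (input-output) equilibrium of `(A,B,C,D)`: the constant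
sequence of length `n+1` is a trajectory of the system. -/
def IsEquil {n m p : ℕ} (A : Matrix (Fin n) (Fin n) ℝ) (B : Matrix (Fin n) (Fin m) ℝ)
    (C : Matrix (Fin p) (Fin n) ℝ) (D : Matrix (Fin p) (Fin m) ℝ)
    (us : Fin m → ℝ) (ys : Fin p → ℝ) : Prop :=
  IsTraj A B C D (n + 1) (fun _ => us) (fun _ => ys)

open Matrix

/-- A matrix whose rank is its number of rows has trivial left kernel. -/
lemma vecMul_eq_zero_of_rank {ι κ : Type*} [Fintype ι] [Fintype κ]
    (M : Matrix ι κ ℝ) (h : M.rank = Fintype.card ι) (w : ι → ℝ) (hw : w ᵥ* M = 0) : w = 0 := by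
  have hli : LinearIndependent ℝ M.row := by
    rw [linearIndependent_iff_card_eq_finrank_span, ← h, rank_eq_finrank_span_row]
    rfl
  exact Matrix.vecMul_injective_iff.2 hli (by simpa using hw)

/-- A matrix with trivial left kernel has every vector in its column space. -/
lemma exists_mulVec_eq {ι κ : Type*} [Fintype ι] [Fintype κ]
    (M : Matrix ι κ ℝ) (h : ∀ w : ι → ℝ, w ᵥ* M = 0 → w = 0) (b : ι → ℝ) :
    ∃ α, M *ᵥ α = b := by
  have hinj : Function.Injective M.vecMul := by
    intro v w hvw
    have : (v - w) ᵥ* M = 0 := by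
      rw [sub_vecMul]; exact sub_eq_zero.2 hvw
    exact sub_eq_zero.1 (h _ this)
  have hr : M.rank = Fintype.card ι := (Matrix.vecMul_injective_iff.1 hinj).rank_matrix
  have htop : LinearMap.range M.mulVecLin = ⊤ := by
    apply Submodule.eq_top_of_finrank_eq
    rw [Module.finrank_fintype_fun_eq_card]
    exact hr
  obtain ⟨α, hα⟩ := LinearMap.range_eq_top.1 htop b
  exact ⟨α, hα⟩

/-- Coefficients of the inputs in the relation `ξ · x_{j+k} + ∑ η_i · u_{i+j+k}` once `x_{j+k}` is
expressed through `x_j` and the inputs from time `j` on: the sequence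
`ξ A^{k-1} B, …, ξ A B, ξ B, η_0, η_1, …`. -/
noncomputable def relCoeff {n m : ℕ} (A : Matrix (Fin n) (Fin n) ℝ) (B : Matrix (Fin n) (Fin m) ℝ)
    (ξ : Fin n → ℝ) (η : ℕ → Fin m → ℝ) : ℕ → ℕ → Fin m → ℝ
  | 0, i => η i
  | k + 1, 0 => ξ ᵥ* (A ^ k * B)
  | k + 1, i + 1 => relCoeff A B ξ η k i

lemma relation_shift {n m N L : ℕ} (A : Matrix (Fin n) (Fin n) ℝ) (B : Matrix (Fin n) (Fin m) ℝ)
    (x : ℕ → Fin n → ℝ) (u : ℕ → Fin m → ℝ)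
    (hx : ∀ k < N, x (k + 1) = A *ᵥ x k + B *ᵥ u k) (ξ : Fin n → ℝ) (η : ℕ → Fin m → ℝ)
    (k j : ℕ) (hkj : j + k ≤ N) :
    (ξ ᵥ* A ^ k) ⬝ᵥ x j + ∑ i ∈ Finset.range (L + k), relCoeff A B ξ η k i ⬝ᵥ u (i + j) =
      ξ ⬝ᵥ x (j + k) + ∑ i ∈ Finset.range L, η i ⬝ᵥ u (i + (j + k)) := by
  induction k generalizing j with
  | zero => simp [relCoeff]
  | succ k ih =>
    have h := ih (j + 1) (by omega)
    rw [show j + 1 + k = j + (k + 1) by ring] at h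
    rw [← h, ← add_assoc L k 1, Finset.sum_range_succ', hx j (by omega), dotProduct_add,
      dotProduct_mulVec, dotProduct_mulVec, vecMul_vecMul, vecMul_vecMul, ← pow_succ]
    simp only [relCoeff, zero_add, add_assoc, add_comm 1 j]
    ring

/-- If the rows `g 0, …, g n` are successive right shifts of a finitely supported sequence (with
arbitrary new entries at place `0`), a vanishing combination with leading coefficient `1` forces
all of them to vanish: the last nonzero place of `g n` lies beyond that of every earlier row. -/
lemma shift_eq_zero {E : Type*} [AddCommGroup E] [Module ℝ E] (n K : ℕ) (g : ℕ → ℕ → E) (c : ℕ → ℝ)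
    (hg : ∀ k i, g (k + 1) (i + 1) = g k i) (hc : c n = 1) (hK : ∀ i, K ≤ i → g n i = 0)
    (h : ∀ i < K, ∑ k ∈ Finset.range (n + 1), c k • g k i = 0) :
    ∀ k ≤ n, ∀ i, g k i = 0 := by
  have hadd : ∀ r k i, g (k + r) (i + r) = g k i := by
    intro r
    induction r with
    | zero => simp
    | succ r ih => intro k i; rw [← add_assoc, ← add_assoc, hg, ih]
  have hsh : ∀ k ≤ n, ∀ i, g k i = g n (i + (n - k)) := by
    intro k hk i
    rw [← hadd (n - k) k i, Nat.add_sub_cancel' hk]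
  have key : ∀ d, d ≤ K → ∀ i, K - d ≤ i → g n i = 0 := by
    intro d
    induction d with
    | zero => intro _ i hi; exact hK i (by omega)
    | succ d ih =>
      intro hd i hi
      by_cases hi' : K - d ≤ i
      · exact ih (by omega) i hi'
      · have h1 := h i (by omega)
        rw [Finset.sum_range_succ, hc, one_smul, Finset.sum_eq_zero, zero_add] at h1
        · exact h1
        · intro k hk
          have hk := Finset.mem_range.1 hk
          rw [hsh k hk.le, ih (by omega) _ (by omega), smul_zero]
  intro k hk i
  rw [hsh k hk]
  exact key K le_rfl _ (by omega)

/-- The rank condition of Willems' fundamental lemma, stated as triviality of the left kernel. -/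
lemma stacked_vecMul_injective {n m N : ℕ} (A : Matrix (Fin n) (Fin n) ℝ)
    (B : Matrix (Fin n) (Fin m) ℝ) (hctrb : Controllable A B) (hN : 2 * n + 1 ≤ N)
    (x : ℕ → Fin n → ℝ) (u : ℕ → Fin m → ℝ)
    (hx : ∀ k < N, x (k + 1) = A *ᵥ x k + B *ᵥ u k)
    (hPE : (Hankel (2 * n + 1) (N - (2 * n + 1) + 1) u).rank = m * (2 * n + 1))
    (ξ : Fin n → ℝ) (η : ℕ → Fin m → ℝ) (hη : ∀ i, n + 1 ≤ i → η i = 0)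
    (h : ∀ j < N - n, ξ ⬝ᵥ x j + ∑ i ∈ Finset.range (n + 1), η i ⬝ᵥ u (i + j) = 0) :
    ξ = 0 ∧ ∀ i, η i = 0 := by
  set g := relCoeff A B ξ η with hgdef
  set c : ℕ → ℝ := fun k => A.charpoly.coeff k with hcdef
  have hdeg : A.charpoly.natDegree = n := by simp [charpoly_natDegree_eq_dim]
  have hcn : c n = 1 := by
    have := A.charpoly_monic.coeff_natDegree
    rwa [hdeg] at this
  have hCH : ∑ k ∈ Finset.range (n + 1), c k • A ^ k = 0 := by
    have := A.aeval_self_charpoly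
    rwa [Polynomial.aeval_eq_sum_range, hdeg] at this
  have hsupp : ∀ k i, n + 1 + k ≤ i → g k i = 0 := by
    intro k
    induction k with
    | zero => intro i hi; exact hη i hi
    | succ k ih =>
      intro i hi
      obtain ⟨i, rfl⟩ : ∃ i', i = i' + 1 := ⟨i - 1, by omega⟩
      exact ih i (by omega)
  have hrel : ∀ k ≤ n, ∀ j < N - (2 * n + 1) + 1,
      (ξ ᵥ* A ^ k) ⬝ᵥ x j + ∑ i ∈ Finset.range (2 * n + 1), g k i ⬝ᵥ u (i + j) = 0 := by
    intro k hk j hj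
    rw [← h (j + k) (by omega), ← relation_shift A B x u hx ξ η k j (by omega)]
    congr 1
    symm
    apply Finset.sum_subset
    · intro i; simp only [Finset.mem_range]; omega
    · intro i _ hi
      rw [Finset.mem_range, not_lt] at hi
      rw [← hgdef, hsupp k i hi, zero_dotProduct]
  -- The state terms of the combined relation cancel by Cayley–Hamilton.
  have hcomb : ∀ j < N - (2 * n + 1) + 1, ∑ i ∈ Finset.range (2 * n + 1),
      (∑ k ∈ Finset.range (n + 1), c k • g k i) ⬝ᵥ u (i + j) = 0 := by
    intro j hj
    have h0 : ∑ k ∈ Finset.range (n + 1), c k * ((ξ ᵥ* A ^ k) ⬝ᵥ x j) = 0 := by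
      have : ξ ⬝ᵥ ((∑ k ∈ Finset.range (n + 1), c k • A ^ k) *ᵥ x j) = 0 := by
        rw [hCH, zero_mulVec, dotProduct_zero]
      rw [← this, sum_mulVec, dotProduct_sum]
      refine Finset.sum_congr rfl fun k _ => ?_
      rw [smul_mulVec, dotProduct_smul, dotProduct_mulVec, smul_eq_mul]
    have h1 : ∑ k ∈ Finset.range (n + 1), c k * ((ξ ᵥ* A ^ k) ⬝ᵥ x j +
        ∑ i ∈ Finset.range (2 * n + 1), g k i ⬝ᵥ u (i + j)) = 0 := by
      refine Finset.sum_eq_zero fun k hk => ?_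
      rw [hrel k (Nat.lt_succ_iff.1 (Finset.mem_range.1 hk)) j hj, mul_zero]
    simp only [mul_add, Finset.sum_add_distrib, h0, zero_add, Finset.mul_sum] at h1
    rw [Finset.sum_comm] at h1
    rw [← h1]
    refine Finset.sum_congr rfl fun i _ => ?_
    rw [sum_dotProduct]
    refine Finset.sum_congr rfl fun k _ => ?_
    rw [smul_dotProduct, smul_eq_mul]
  have hzero : ∀ i < 2 * n + 1, ∑ k ∈ Finset.range (n + 1), c k • g k i = 0 := by
    have hw := vecMul_eq_zero_of_rank _ (by rw [hPE]; simp [mul_comm])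
      (fun ia : Fin (2 * n + 1) × Fin m => (∑ k ∈ Finset.range (n + 1), c k • g k ia.1.1) ia.2)
      (by
        funext j
        rw [Pi.zero_apply, ← hcomb j.1 j.2, Finset.sum_range]
        simp only [vecMul, dotProduct, Fintype.sum_prod_type, Hankel, of_apply])
    intro i hi
    funext a
    exact congrFun hw (⟨i, hi⟩, a)
  have hall := shift_eq_zero n (2 * n + 1) g c (fun _ _ => rfl) hcn
    (fun i hi => hsupp n i (by omega)) hzero
  refine ⟨?_, fun i => hall 0 (Nat.zero_le n) i⟩
  refine vecMul_eq_zero_of_rank _ (by rw [Fintype.card_fin]; exact hctrb) ξ ?_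
  funext kj
  exact congrFun (hall (kj.1 + 1) kj.1.2 0) kj.2

/-- A combination of the columns of a Hankel matrix, read one block row at a time. -/
lemma hankel_mulVec_eq_iff {d L M : ℕ} (w : ℕ → Fin d → ℝ) (α : Fin M → ℝ) (ws : Fin d → ℝ) :
    (Hankel L M w) *ᵥ α = (fun ia => ws ia.2) ↔ ∀ k < L, ∑ j, α j • w (k + j.1) = ws := by
  constructor
  · intro h k hk
    funext a
    rw [← congrFun h (⟨k, hk⟩, a)]
    simp [mulVec, dotProduct, Hankel, mul_comm]
  · intro h
    funext ⟨k, a⟩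
    rw [← h k.1 k.2]
    simp [mulVec, dotProduct, Hankel, mul_comm]

/-- If `u^d` is persistently exciting of order `2n+1` and `(u^d, y^d)` is a trajectory of
the minimal system `(A,B,C,D)`, then `(u^s, y^s)` is an equilibrium iff the vector of
`n+1` stacked copies of `(u^s, y^s)` is in the image of the depth-`(n+1)` Hankel matrices. -/
theorem statement1 {n m p N : ℕ} (hn : 1 ≤ n) (hm : 1 ≤ m) (hp : 1 ≤ p)
    (A : Matrix (Fin n) (Fin n) ℝ) (B : Matrix (Fin n) (Fin m) ℝ)
    (C : Matrix (Fin p) (Fin n) ℝ) (D : Matrix (Fin p) (Fin m) ℝ)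
    (hctrb : Controllable A B) (hobs : Observable A C)
    (ud : ℕ → Fin m → ℝ) (yd : ℕ → Fin p → ℝ)
    (hN : 2 * n + 1 ≤ N)
    (htraj : IsTraj A B C D N ud yd)
    (hPE : (Hankel (2 * n + 1) (N - (2 * n + 1) + 1) ud).rank = m * (2 * n + 1))
    (us : Fin m → ℝ) (ys : Fin p → ℝ) :
    IsEquil A B C D us ys ↔
      ∃ α : Fin (N - n) → ℝ,
        (Hankel (n + 1) (N - n) ud).mulVec α = (fun ia => us ia.2) ∧
        (Hankel (n + 1) (N - n) yd).mulVec α = (fun ia => ys ia.2) := by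
  obtain ⟨x, hx⟩ := htraj
  have hcombine : ∀ (α : Fin (N - n) → ℝ), ∀ k < n + 1,
      (∑ j, α j • x (k + 1 + j.1) =
        A *ᵥ (∑ j, α j • x (k + j.1)) + B *ᵥ (∑ j, α j • ud (k + j.1))) ∧
      (∑ j, α j • yd (k + j.1) =
        C *ᵥ (∑ j, α j • x (k + j.1)) + D *ᵥ (∑ j, α j • ud (k + j.1))) := by
    intro α k hk
    simp only [mulVec_sum, mulVec_smul, ← Finset.sum_add_distrib, ← smul_add]
    constructor <;> refine Finset.sum_congr rfl fun j _ => ?_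
    · rw [show k + 1 + j.1 = k + j.1 + 1 by ring, (hx (k + j.1) (by omega)).1]
    · rw [(hx (k + j.1) (by omega)).2]
  simp only [hankel_mulVec_eq_iff]
  constructor
  · rintro ⟨z, hz⟩
    -- Realise the initial state `z 0` and the constant input by the data.
    obtain ⟨α, hα⟩ := exists_mulVec_eq
      (fromRows (of fun (a : Fin n) (j : Fin (N - n)) => x j.1 a) (Hankel (n + 1) (N - n) ud))
      (by
        intro w hw
        obtain ⟨η, hη, hη0⟩ : ∃ η : ℕ → Fin m → ℝ,
            (∀ (i : Fin (n + 1)) a, η i a = w (Sum.inr (i, a))) ∧ ∀ i, n + 1 ≤ i → η i = 0 :=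
          ⟨fun i a => if hi : i < n + 1 then w (Sum.inr (⟨i, hi⟩, a)) else 0,
            fun i a => dif_pos i.2, fun i hi => funext fun a => dif_neg (not_lt.2 hi)⟩
        obtain ⟨h1, h2⟩ := stacked_vecMul_injective A B hctrb hN x ud (fun k hk => (hx k hk).1)
          hPE (fun a => w (Sum.inl a)) η hη0
          (by
            intro j hj
            have := congrFun hw ⟨j, hj⟩
            rw [Pi.zero_apply] at this
            rw [← this, Finset.sum_range]
            simp [vecMul, dotProduct, Fintype.sum_prod_type, Hankel, hη])
        funext s
        rcases s with a | ⟨i, a⟩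
        · exact congrFun h1 a
        · simpa [hη] using congrFun (h2 i.1) a)
      (Sum.elim (z 0) (fun ia => us ia.2))
    rw [fromRows_mulVec] at hα
    have hα1 : ∑ j, α j • x j.1 = z 0 := by
      funext a
      have := congrFun hα (Sum.inl a)
      simp only [Sum.elim_inl] at this
      rw [← this]
      simp [mulVec, dotProduct, mul_comm]
    have hα2 : ∀ k < n + 1, ∑ j, α j • ud (k + j.1) = us :=
      (hankel_mulVec_eq_iff ud α us).1 (funext fun ia => congrFun hα (Sum.inr ia))
    have hstate : ∀ k ≤ n + 1, ∑ j, α j • x (k + j.1) = z k := by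
      intro k
      induction k with
      | zero => intro _; simpa using hα1
      | succ k ih =>
        intro hk
        rw [(hcombine α k hk).1, ih (by omega), hα2 k hk, (hz k hk).1]
    refine ⟨α, hα2, fun k hk => ?_⟩
    rw [(hcombine α k hk).2, hstate k hk.le, hα2 k hk, ← (hz k hk).2]
  · rintro ⟨α, hu, hy⟩
    refine ⟨fun k => ∑ j, α j • x (k + j.1), fun k hk => ?_⟩
    have h := hcombine α k hk
    rw [hu k hk, hy k hk] at h
    exact h
end

section
/- Suppose (A,C) is observable, L ≥ n, and {(u_k, y_k)}_{k=0}^{L+n} is a trajectory of (A,B,C,D) such that (u_k, y_k) = (u^s, y^s) for all k ∈ {L, ..., L+n} (the last n+1 input-output pairs are constant). Then the one-step-shifted and appended sequence {(ũ_k, ỹ_k)}_{k=0}^{L+n} defined by (ũ_k, ỹ_k) = (u_{k+1}, y_{k+1}) for k ∈ {0, ..., L+n−1} and (ũ_{L+n}, ỹ_{L+n}) = (u^s, y^s) is also a trajectory of (A,B,C,D). -/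
/-- The unobservable subspace of an observable pair is trivial. -/
theorem Observable.eq_zero {n p : ℕ} {A : Matrix (Fin n) (Fin n) ℝ}
    {C : Matrix (Fin p) (Fin n) ℝ} (h : Observable A C) {v : Fin n → ℝ}
    (hv : ∀ i < n, C.mulVec ((A ^ i).mulVec v) = 0) : v = 0 := by
  unfold Observable at h
  set O : Matrix (Fin n × Fin p) (Fin n) ℝ :=
    Matrix.of fun ki j => (C * A ^ (ki.1 : ℕ)) ki.2 j with hO
  have hrn := O.mulVecLin.finrank_range_add_finrank_ker
  rw [Matrix.rank] at h
  rw [h, Module.finrank_fin_fun] at hrn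
  have hker : LinearMap.ker O.mulVecLin = ⊥ := Submodule.finrank_eq_zero.mp (by omega)
  apply LinearMap.ker_eq_bot'.mp hker
  ext ⟨k, a⟩
  have := congrFun (hv k k.2) a
  rw [Matrix.mulVec_mulVec] at this
  exact this

/-- Shifting a trajectory whose last `n+1` input-output pairs equal `(u^s, y^s)` by one
step and appending `(u^s, y^s)` again yields a trajectory (with `(A,C)` observable). -/
theorem statement7 {n m p L : ℕ} (hn : 1 ≤ n) (hm : 1 ≤ m) (hp : 1 ≤ p)
    (A : Matrix (Fin n) (Fin n) ℝ) (B : Matrix (Fin n) (Fin m) ℝ)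
    (C : Matrix (Fin p) (Fin n) ℝ) (D : Matrix (Fin p) (Fin m) ℝ)
    (hobs : Observable A C) (hL : n ≤ L)
    (u : ℕ → Fin m → ℝ) (y : ℕ → Fin p → ℝ) (us : Fin m → ℝ) (ys : Fin p → ℝ)
    (htraj : IsTraj A B C D (L + n + 1) u y)
    (hconstu : ∀ k, L ≤ k → k ≤ L + n → u k = us)
    (hconsty : ∀ k, L ≤ k → k ≤ L + n → y k = ys) :
    IsTraj A B C D (L + n + 1)
      (fun k => if k < L + n then u (k + 1) else us)
      (fun k => if k < L + n then y (k + 1) else ys) := by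
  obtain ⟨x, hx⟩ := htraj
  have hd : ∀ i ≤ n, x (L + i + 1) - x (L + i) = (A ^ i).mulVec (x (L + 1) - x L) := by
    intro i
    induction i with
    | zero => simp
    | succ i ih =>
      intro hi
      have h1 := (hx (L + i) (by omega)).1
      have h2 := (hx (L + (i + 1)) (by omega)).1
      rw [hconstu _ (by omega) (by omega)] at h1 h2
      rw [pow_succ', ← Matrix.mulVec_mulVec, ← ih (by omega), Matrix.mulVec_sub, h2]
      nth_rewrite 2 [← add_assoc]
      rw [h1, ← add_assoc L i 1, h1]
      abel
  have hd0 : x (L + 1) - x L = 0 := by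
    refine hobs.eq_zero fun i hi => ?_
    have h1 := (hx (L + i) (by omega)).2
    have h2 := (hx (L + i + 1) (by omega)).2
    rw [hconstu _ (by omega) (by omega), hconsty _ (by omega) (by omega)] at h1 h2
    rw [← hd i hi.le, Matrix.mulVec_sub, sub_eq_zero]
    exact add_right_cancel (h2.symm.trans h1)
  have hrest : x (L + n + 1) = x (L + n) := by
    have := hd n le_rfl
    rwa [hd0, Matrix.mulVec_zero, sub_eq_zero] at this
  refine ⟨fun k => if k ≤ L + n then x (k + 1) else x (L + n + 1), fun k hk => ?_⟩
  rcases Nat.lt_or_ge k (L + n) with h | h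
  · simpa [h, h.le, Nat.succ_le_of_lt h] using hx (k + 1) (by omega)
  · obtain rfl : k = L + n := by omega
    have h1 := hx (L + n) (by omega)
    rw [hconstu _ (by omega) le_rfl, hconsty _ (by omega) le_rfl] at h1
    have hnot : ¬ L + n + 1 ≤ L + n := by omega
    simp only [hnot, le_refl, lt_irrefl, if_true, if_false]
    -- The last sample of the original trajectory, with `x (L + n + 1) = x (L + n)`.
    rw [hrest] at h1 ⊢
    exact h1
end

section
/- Suppose (A,C) is observable. Then there exists a constant a₃ > 0, depending only on (A,B,C,D), such that for every trajectory {(u_i, y_i)}_{i=0}^{n-1} of (A,B,C,D) with associated state sequence {x_i}_{i=0}^{n}, every triple (x^s, u^s, y^s) satisfying (I − A) x^s = B u^s and y^s = C x^s + D u^s, and every index k ∈ {0, ..., n−1}, there exists an index j ∈ {0, ..., n−1} such that ‖x_k − x^s‖₂² ≤ a₃ · n · (‖u_j − u^s‖₂² + ‖y_j − y^s‖₂²). -/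
/-- Observability makes the observability map `e ↦ (C A^k e)_{k < n}` injective. -/
theorem eq_zero_of_observable {n p : ℕ} {A : Matrix (Fin n) (Fin n) ℝ}
    {C : Matrix (Fin p) (Fin n) ℝ} (hobs : Observable A C) (e : Fin n → ℝ)
    (he : ∀ k < n, (C * A ^ k).mulVec e = 0) : e = 0 := by
  unfold Observable at hobs
  set O : Matrix (Fin n × Fin p) (Fin n) ℝ :=
    Matrix.of fun (ki : Fin n × Fin p) (j : Fin n) => (C * A ^ (ki.1 : ℕ)) ki.2 j with hO
  have h1 := LinearMap.finrank_range_add_finrank_ker O.mulVecLin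
  have h2 : Module.finrank ℝ (LinearMap.range O.mulVecLin) = n := hobs
  rw [h2, Module.finrank_fin_fun] at h1
  have h3 : LinearMap.ker O.mulVecLin = ⊥ := Submodule.finrank_eq_zero.mp (by omega)
  have h4 : e ∈ LinearMap.ker O.mulVecLin := by
    rw [LinearMap.mem_ker, Matrix.mulVecLin_apply]
    funext ki
    exact congrFun (he ki.1 ki.1.2) ki.2
  rwa [h3, Submodule.mem_bot] at h4

/-- The space of length-`n` trajectories `(e, (v, z))` of `(A,B,C,D)`: states `e_0, ..., e_n`
together with the input-output pairs `(v_i, z_i)` for `i < n`. -/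
def trajSpace {n m p : ℕ} (A : Matrix (Fin n) (Fin n) ℝ) (B : Matrix (Fin n) (Fin m) ℝ)
    (C : Matrix (Fin p) (Fin n) ℝ) (D : Matrix (Fin p) (Fin m) ℝ) :
    Submodule ℝ ((Fin (n + 1) → Fin n → ℝ) × (Fin n → (Fin m → ℝ) × (Fin p → ℝ))) where
  carrier := {w | ∀ i : Fin n,
    w.1 i.succ = A.mulVec (w.1 i.castSucc) + B.mulVec (w.2 i).1 ∧
    (w.2 i).2 = C.mulVec (w.1 i.castSucc) + D.mulVec (w.2 i).1}
  zero_mem' := by intro i; simp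
  add_mem' := by
    intro a b ha hb i
    obtain ⟨ha1, ha2⟩ := ha i
    obtain ⟨hb1, hb2⟩ := hb i
    simp only [Prod.fst_add, Prod.snd_add, Pi.add_apply, Matrix.mulVec_add, ha1, ha2, hb1, hb2]
    constructor <;> abel
  smul_mem' := by
    intro c a ha i
    obtain ⟨ha1, ha2⟩ := ha i
    simp only [Prod.smul_fst, Prod.smul_snd, Pi.smul_apply, Matrix.mulVec_smul, ha1, ha2, smul_add]
    exact ⟨trivial, trivial⟩

/-- The input-output part of a trajectory. -/
def ioMap {n m p : ℕ} (A : Matrix (Fin n) (Fin n) ℝ) (B : Matrix (Fin n) (Fin m) ℝ)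
    (C : Matrix (Fin p) (Fin n) ℝ) (D : Matrix (Fin p) (Fin m) ℝ) :
    trajSpace A B C D →ₗ[ℝ] (Fin n → (Fin m → ℝ) × (Fin p → ℝ)) :=
  LinearMap.snd ℝ _ _ ∘ₗ (trajSpace A B C D).subtype

theorem ioMap_injective {n m p : ℕ} {A : Matrix (Fin n) (Fin n) ℝ} (B : Matrix (Fin n) (Fin m) ℝ)
    {C : Matrix (Fin p) (Fin n) ℝ} (D : Matrix (Fin p) (Fin m) ℝ) (hobs : Observable A C) :
    Function.Injective (ioMap A B C D) := by
  rw [← LinearMap.ker_eq_bot, LinearMap.ker_eq_bot']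
  rintro ⟨⟨e, vz⟩, hw⟩ h0
  change vz = 0 at h0
  subst h0
  have hst : ∀ i : Fin n, e i.succ = A.mulVec (e i.castSucc) ∧
      0 = C.mulVec (e i.castSucc) := by
    intro i
    simpa using hw i
  have hpow : ∀ i : Fin (n + 1), e i = (A ^ (i : ℕ)).mulVec (e 0) := by
    intro i
    induction i using Fin.induction with
    | zero => simp
    | succ i ih =>
      rw [(hst i).1, ih, Matrix.mulVec_mulVec, Fin.val_castSucc, Fin.val_succ, pow_succ']
  have he0 : e 0 = 0 := by
    apply eq_zero_of_observable hobs
    intro k hk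
    have h := (hst ⟨k, hk⟩).2
    rw [hpow, Matrix.mulVec_mulVec] at h
    exact h.symm
  have he : e = 0 := by
    funext i
    rw [hpow, he0, Matrix.mulVec_zero]
    rfl
  subst he
  rfl

theorem sqnorm_nonneg {d : ℕ} (v : Fin d → ℝ) : 0 ≤ sqnorm v :=
  Finset.sum_nonneg fun _ _ => sq_nonneg _

theorem sqnorm_le_mul_norm_sq {d : ℕ} (v : Fin d → ℝ) : sqnorm v ≤ d * ‖v‖ ^ 2 := by
  have h : ∀ i ∈ Finset.univ, (v i) ^ 2 ≤ ‖v‖ ^ 2 := fun i _ => by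
    rw [← sq_abs]
    exact pow_le_pow_left₀ (abs_nonneg _) (norm_le_pi_norm v i) 2
  simpa [sqnorm] using Finset.sum_le_card_nsmul _ _ _ h

theorem norm_sq_le_sqnorm {d : ℕ} (v : Fin d → ℝ) : ‖v‖ ^ 2 ≤ sqnorm v := by
  have h : ‖v‖ ≤ √(sqnorm v) := by
    rw [pi_norm_le_iff_of_nonneg (Real.sqrt_nonneg _)]
    intro i
    exact Real.abs_le_sqrt
      (Finset.single_le_sum (f := fun i => (v i) ^ 2) (fun _ _ => sq_nonneg _) (Finset.mem_univ i))
  calc ‖v‖ ^ 2 ≤ √(sqnorm v) ^ 2 := pow_le_pow_left₀ (norm_nonneg _) h 2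
    _ = sqnorm v := Real.sq_sqrt (sqnorm_nonneg v)

theorem norm_prod_sq_le {m p : ℕ} (q : (Fin m → ℝ) × (Fin p → ℝ)) :
    ‖q‖ ^ 2 ≤ sqnorm q.1 + sqnorm q.2 := by
  have h1 := norm_sq_le_sqnorm q.1
  have h2 := norm_sq_le_sqnorm q.2
  have h3 := sqnorm_nonneg q.1
  have h4 := sqnorm_nonneg q.2
  rw [Prod.norm_def]
  rcases max_choice ‖q.1‖ ‖q.2‖ with h | h <;> rw [h] <;> linarith

/-- If some state of a trajectory is far from an equilibrium state, then at some time
within the first `n` steps the input or output must be far from the equilibrium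
input-output pair (Lemma 5-type auxiliary bound). -/
theorem statement11 {n m p : ℕ} (hn : 1 ≤ n) (hm : 1 ≤ m) (hp : 1 ≤ p)
    (A : Matrix (Fin n) (Fin n) ℝ) (B : Matrix (Fin n) (Fin m) ℝ)
    (C : Matrix (Fin p) (Fin n) ℝ) (D : Matrix (Fin p) (Fin m) ℝ)
    (hobs : Observable A C) :
    ∃ a3 : ℝ, 0 < a3 ∧
      ∀ (x : ℕ → Fin n → ℝ) (u : ℕ → Fin m → ℝ) (y : ℕ → Fin p → ℝ),
        (∀ i < n, x (i + 1) = A.mulVec (x i) + B.mulVec (u i) ∧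
                  y i = C.mulVec (x i) + D.mulVec (u i)) →
        ∀ (xs : Fin n → ℝ) (us : Fin m → ℝ) (ys : Fin p → ℝ),
          (1 - A).mulVec xs = B.mulVec us →
          ys = C.mulVec xs + D.mulVec us →
          ∀ k < n, ∃ j < n,
            sqnorm (x k - xs) ≤ a3 * n * (sqnorm (u j - us) + sqnorm (y j - ys)) := by
  obtain ⟨K, hK, hanti⟩ :=
    (LinearMap.injective_iff_antilipschitz (ioMap A B C D)).mp (ioMap_injective B D hobs)
  refine ⟨(K : ℝ) ^ 2, by positivity, ?_⟩
  intro x u y htraj xs us ys hxs hys k hk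
  have hxs' : xs = A.mulVec xs + B.mulVec us := by
    rw [← hxs, Matrix.sub_mulVec, Matrix.one_mulVec]
    abel
  let w : trajSpace A B C D :=
    ⟨(fun i => x i - xs, fun i => (u i - us, y i - ys)), by
      intro i
      obtain ⟨h1, h2⟩ := htraj i i.2
      simp only [Fin.val_succ, Fin.val_castSucc, Matrix.mulVec_sub]
      constructor
      · rw [h1]
        nth_rewrite 1 [hxs']
        abel
      · rw [h2, hys]
        abel⟩
  have hw : ‖w‖ ≤ K * ‖ioMap A B C D w‖ := by
    simpa using hanti.le_mul_dist w 0
  have hxk : ‖x k - xs‖ ≤ ‖w‖ :=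
    (norm_le_pi_norm w.1.1 ⟨k, by omega⟩).trans (norm_fst_le w.1)
  haveI : Nonempty (Fin n) := ⟨⟨0, hn⟩⟩
  -- The sup norm of the finite input-output sequence is attained at some time `j`.
  obtain ⟨j, hj⟩ := Finite.exists_max fun i => ‖ioMap A B C D w i‖
  have hmax : ‖ioMap A B C D w‖ ≤ ‖ioMap A B C D w j‖ :=
    (pi_norm_le_iff_of_nonneg (norm_nonneg _)).mpr hj
  refine ⟨j, j.2, ?_⟩
  have hb : ‖x k - xs‖ ≤ K * ‖ioMap A B C D w j‖ :=
    hxk.trans (hw.trans (mul_le_mul_of_nonneg_left hmax K.2))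
  calc sqnorm (x k - xs) ≤ n * ‖x k - xs‖ ^ 2 := sqnorm_le_mul_norm_sq _
    _ ≤ n * (K * ‖ioMap A B C D w j‖) ^ 2 := by gcongr
    _ = (K : ℝ) ^ 2 * n * ‖ioMap A B C D w j‖ ^ 2 := by ring
    _ ≤ (K : ℝ) ^ 2 * n * (sqnorm (u j - us) + sqnorm (y j - ys)) := by
      gcongr
      exact norm_prod_sq_le (ioMap A B C D w j)
end
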